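/- Let M be an m×p real matrix of rank p and N an n×p real matrix of rank p, and let (Ṁ, Ṅ) ∈ ℝ^{m×p} × ℝ^{n×p}. Then there is a unique Ṙ ∈ ℝ^{p×p} solving the Sylvester equation NᵀN MᵀM Ṙ + Ṙ NᵀN MᵀM = −NᵀN MᵀṀ + Ṅᵀ N MᵀM, and for this Ṙ the pair (Ṁ + M Ṙ, Ṅ − N Ṙᵀ) satisfies the horizontality condition NᵀN Mᵀ(Ṁ + MṘ) = (Ṅ − NṘᵀ)ᵀ N MᵀM. Thus (Ṁ + M Ṙ, Ṅ − N Ṙᵀ) is the projection of (Ṁ,Ṅ) onto the horizontal space along the vertical space. -/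

import Mathlib

open Matrix

/-!
The Gram matrices `A = Nᴴ N` and `B = Mᴴ M` are positive definite. Multiplying the Sylvester
equation `A B X + X A B = F` by `A⁻¹` on the left and by `B⁻¹` on the right turns it into
`B X B⁻¹ + A⁻¹ X A = A⁻¹ F B⁻¹`. On `vec X` the left-hand side acts by the matrix
`(B⁻¹)ᵀ ⊗ B + Aᵀ ⊗ A⁻¹`, a sum of Kronecker products of positive definite matrices; it is
therefore positive definite, hence invertible. Horizontality of `(dM + M X, dN - N Xᴴ)` is the
Sylvester equation with its terms rearranged.
-/

open scoped Kronecker ComplexOrder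

section Gram

variable {R m n : Type*} [CommRing R] [Fintype n] {M : Matrix m n R}

theorem mulVec_injective_of_rank_eq_card [Nontrivial R]
    (hM : M.rank = Fintype.card n) : Function.Injective M.mulVec := by
  rw [mulVec_injective_iff, linearIndependent_iff_card_eq_finrank_span, Set.finrank,
    ← rank_eq_finrank_span_cols, hM]

theorem posDef_conjTranspose_mul_self_of_rank_eq_card [IsDomain R] [PartialOrder R]
    [StarRing R] [StarOrderedRing R] [Fintype m] (hM : M.rank = Fintype.card n) :
    (Mᴴ * M).PosDef :=
  .conjTranspose_mul_self M (mulVec_injective_of_rank_eq_card hM)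

end Gram

section Sylvester

variable {𝕜 m n : Type*} [RCLike 𝕜] [Fintype m] [Fintype n]
  {A B : Matrix m m 𝕜} {C D : Matrix n n 𝕜}

theorem existsUnique_mul_mul_add_mul_mul_eq_of_posDef
    (hA : A.PosDef) (hB : B.PosDef) (hC : C.PosDef) (hD : D.PosDef) (F : Matrix m n 𝕜) :
    ∃! X : Matrix m n 𝕜, A * X * C + B * X * D = F := by
  classical
  have hT : (Cᵀ ⊗ₖ A + Dᵀ ⊗ₖ B).PosDef :=
    (hC.transpose.kronecker hA).add (hD.transpose.kronecker hB)
  have vec_eq (X : Matrix m n 𝕜) :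
      (Cᵀ ⊗ₖ A + Dᵀ ⊗ₖ B) *ᵥ X.vec = (A * X * C + B * X * D).vec := by
    simp only [add_mulVec, kronecker_mulVec_vec, transpose_transpose, vec_add]
  have hbij : Function.Bijective fun X : Matrix m n 𝕜 ↦ (Cᵀ ⊗ₖ A + Dᵀ ⊗ₖ B) *ᵥ X.vec :=
    .comp ⟨mulVec_injective_iff_isUnit.mpr hT.isUnit, mulVec_surjective_iff_isUnit.mpr hT.isUnit⟩
      vec_bijective
  simpa only [vec_eq, vec_inj] using hbij.existsUnique F.vec

theorem existsUnique_sylvester_of_posDef_mul_posDef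
    (hA : A.PosDef) (hB : B.PosDef) (hC : C.PosDef) (hD : D.PosDef) (F : Matrix m n 𝕜) :
    ∃! X : Matrix m n 𝕜, A * B * X + X * (C * D) = F := by
  classical
  have hAu : IsUnit A.det := A.isUnit_iff_isUnit_det.mp hA.isUnit
  have hDu : IsUnit D.det := D.isUnit_iff_isUnit_det.mp hD.isUnit
  have := hA.inv.isUnit.invertible
  have := hD.inv.isUnit.invertible
  have conj_eq_iff (X : Matrix m n 𝕜) :
      B * X * D⁻¹ + A⁻¹ * X * C = A⁻¹ * F * D⁻¹ ↔ A * B * X + X * (C * D) = F := by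
    have factor : B * X * D⁻¹ + A⁻¹ * X * C = A⁻¹ * (A * B * X + X * (C * D)) * D⁻¹ := by
      simp only [Matrix.mul_add, Matrix.add_mul, Matrix.mul_assoc,
        nonsing_inv_mul_cancel_left _ _ hAu, mul_nonsing_inv _ hDu, Matrix.mul_one]
    rw [factor, Matrix.mul_left_inj_of_invertible, Matrix.mul_right_inj_of_invertible]
  simpa only [conj_eq_iff] using
    existsUnique_mul_mul_add_mul_mul_eq_of_posDef hB hA.inv hD.inv hC (A⁻¹ * F * D⁻¹)

end Sylvester

theorem sylvester_iff_horizontal {R m n p : Type*} [Ring R] [StarRing R]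
    [Fintype m] [Fintype n] [Fintype p] (M dM : Matrix m p R) (N dN : Matrix n p R)
    (dR : Matrix p p R) :
    Nᴴ * N * (Mᴴ * M) * dR + dR * (Nᴴ * N * (Mᴴ * M)) =
        -(Nᴴ * N * (Mᴴ * dM)) + dNᴴ * N * (Mᴴ * M) ↔
      Nᴴ * N * (Mᴴ * (dM + M * dR)) = (dN - N * dRᴴ)ᴴ * N * (Mᴴ * M) := by
  simp only [conjTranspose_sub, conjTranspose_mul, conjTranspose_conjTranspose, Matrix.mul_add,
    Matrix.sub_mul, Matrix.mul_assoc]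
  rw [eq_neg_add_iff_add_eq, eq_sub_iff_add_eq, add_assoc]

theorem horizontal_projection_weighted_general {𝕜 m n p : Type*} [RCLike 𝕜]
    [Fintype m] [Fintype n] [Fintype p] (M : Matrix m p 𝕜) (N : Matrix n p 𝕜)
    (hM : M.rank = Fintype.card p) (hN : N.rank = Fintype.card p)
    (dM : Matrix m p 𝕜) (dN : Matrix n p 𝕜) :
    (∃! dR : Matrix p p 𝕜,
        Nᴴ * N * (Mᴴ * M) * dR + dR * (Nᴴ * N * (Mᴴ * M)) =
          -(Nᴴ * N * (Mᴴ * dM)) + dNᴴ * N * (Mᴴ * M)) ∧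
    ∀ dR : Matrix p p 𝕜,
      Nᴴ * N * (Mᴴ * M) * dR + dR * (Nᴴ * N * (Mᴴ * M)) =
          -(Nᴴ * N * (Mᴴ * dM)) + dNᴴ * N * (Mᴴ * M) ↔
      Nᴴ * N * (Mᴴ * (dM + M * dR)) = (dN - N * dRᴴ)ᴴ * N * (Mᴴ * M) := by
  have hA : (Nᴴ * N).PosDef := posDef_conjTranspose_mul_self_of_rank_eq_card hN
  have hB : (Mᴴ * M).PosDef := posDef_conjTranspose_mul_self_of_rank_eq_card hM
  exact ⟨existsUnique_sylvester_of_posDef_mul_posDef hA hB hA hB _,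
    sylvester_iff_horizontal M dM N dN⟩

/-- Horizontal projection in the weighted geometry: there is a unique Ṙ solving the Sylvester
equation NᵀN MᵀM Ṙ + Ṙ NᵀN MᵀM = −NᵀN MᵀṀ + ṄᵀN MᵀM, and the resulting pair
(Ṁ + M Ṙ, Ṅ − N Ṙᵀ) is horizontal. -/
theorem horizontal_projection_weighted (m n p : ℕ) (hp : 0 < p) (hpm : p ≤ m) (hpn : p ≤ n)
    (M : Matrix (Fin m) (Fin p) ℝ) (N : Matrix (Fin n) (Fin p) ℝ)
    (hM : M.rank = p) (hN : N.rank = p)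
    (dM : Matrix (Fin m) (Fin p) ℝ) (dN : Matrix (Fin n) (Fin p) ℝ) :
    (∃! dR : Matrix (Fin p) (Fin p) ℝ,
        Nᵀ * N * (Mᵀ * M) * dR + dR * (Nᵀ * N * (Mᵀ * M)) =
          -(Nᵀ * N * (Mᵀ * dM)) + dNᵀ * N * (Mᵀ * M)) ∧
    ∀ dR : Matrix (Fin p) (Fin p) ℝ,
      Nᵀ * N * (Mᵀ * M) * dR + dR * (Nᵀ * N * (Mᵀ * M)) =
          -(Nᵀ * N * (Mᵀ * dM)) + dNᵀ * N * (Mᵀ * M) →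
      Nᵀ * N * (Mᵀ * (dM + M * dR)) = (dN - N * dRᵀ)ᵀ * N * (Mᵀ * M) := by
  have h := horizontal_projection_weighted_general M N (by simpa using hM) (by simpa using hN) dM dN
  simp only [conjTranspose_eq_transpose_of_trivial] at h
  exact h.imp_right fun sylvester_iff dR ↦ (sylvester_iff dR).mp
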